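/- Let k ≥ 2 and let e₁,…,e_k be integers with e_i ≥ 2 for all i and e_j ≥ 3 for some j. If B(e₁−1, e₂, …, e_{k−1}, e_k−1) = [[a,b],[c,d]], then reversing the order of the e's gives B(e_k−1, e_{k−1}, …, e₂, e₁−1) = [[d,b],[c,a]]; that is, reversing the order exchanges the diagonal entries a and d and leaves b and c unchanged. -/

import Mathlib

/-- The matrix `[[0,-1],[1,x]]`. -/
def Mb (x : ℤ) : Matrix (Fin 2) (Fin 2) ℤ := !![0, -1; 1, x]

/-- The product `[[0,-1],[1,b_k]] ⋯ [[0,-1],[1,b₁]]` for a list `[b₁,…,b_k]`. -/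
def prodB (L : List ℤ) : Matrix (Fin 2) (Fin 2) ℤ := ((L.map Mb).reverse).prod

/-- `B(b₁,…,b_k) = [[0,1],[-1,0]] · [[0,-1],[1,b_k]] ⋯ [[0,-1],[1,b₁]]`. -/
def Bmat (L : List ℤ) : Matrix (Fin 2) (Fin 2) ℤ := !![0, 1; -1, 0] * prodB L

/-- The list `e₁-1, e₂, …, e_{k-1}, e_k-1`. -/
def cuspList (k : ℕ) (e : Fin k → ℤ) : List ℤ :=
  List.ofFn fun i => e i - (if i.val = 0 ∨ i.val = k - 1 then 1 else 0)

theorem prodB_cons (x : ℤ) (L : List ℤ) : prodB (x :: L) = prodB L * Mb x := by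
  simp [prodB]

theorem prodB_append_singleton (L : List ℤ) (x : ℤ) : prodB (L ++ [x]) = Mb x * prodB L := by
  simp [prodB]

/-- Each `Mb x` is fixed by transposing and negating the off-diagonal entries, which reverses
products. -/
theorem prodB_reverse (L : List ℤ) :
    prodB L.reverse =
      !![prodB L 0 0, -prodB L 1 0; -prodB L 0 1, prodB L 1 1] := by
  induction L with
  | nil => simp [prodB, Matrix.one_fin_two]
  | cons x L ih =>
    rw [List.reverse_cons, prodB_append_singleton, prodB_cons, ih]
    ext i j
    fin_cases i <;> fin_cases j <;> simp [Mb, Matrix.mul_apply, Fin.sum_univ_two] <;> ring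

theorem Bmat_eq (L : List ℤ) :
    Bmat L = !![prodB L 1 0, prodB L 1 1; -prodB L 0 0, -prodB L 0 1] := by
  ext i j
  fin_cases i <;> fin_cases j <;> simp [Bmat, Matrix.mul_apply, Fin.sum_univ_two]

theorem Bmat_reverse (L : List ℤ) :
    Bmat L.reverse = !![Bmat L 1 1, Bmat L 0 1; Bmat L 1 0, Bmat L 0 0] := by
  simp [Bmat_eq, prodB_reverse]

theorem cuspList_rev (k : ℕ) (e : Fin k → ℤ) :
    cuspList k (fun i => e i.rev) = (cuspList k e).reverse := by
  apply List.ext_getElem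
  · simp [cuspList]
  · intro n h₁ h₂
    have hn : n < k := by simpa [cuspList] using h₁
    have hiff : (n = 0 ∨ n = k - 1) ↔ (k - 1 - n = 0 ∨ k - 1 - n = k - 1) := by omega
    have hrev : Fin.rev ⟨n, hn⟩ = (⟨k - 1 - n, by omega⟩ : Fin k) := by
      ext
      simp only [Fin.val_rev]
      omega
    simp only [cuspList, List.getElem_reverse, List.getElem_ofFn, List.length_ofFn, hrev, hiff]

theorem stmt_5 (k : ℕ) (hk : 2 ≤ k) (e : Fin k → ℤ)
    (he : ∀ i, 2 ≤ e i) (h3 : ∃ j, 3 ≤ e j) (a b c d : ℤ)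
    (heq : Bmat (cuspList k e) = !![a, b; c, d]) :
    Bmat (cuspList k (fun i => e i.rev)) = !![d, b; c, a] := by
  rw [cuspList_rev, Bmat_reverse, heq]
  simp
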